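/- (Weak convergence) Under the step-size-s SFBS iteration with F L-Lipschitz, G maximally monotone, T = F + G ρ-comonotone, ρ > −1/(2L), max{0, −2ρ} < s < 1/L, r > 1 and 0 < D < (r−1)(s + 2ρ), both sequences (z_k) and (u_k) converge weakly to the same point z∞ satisfying −F(z∞) ∈ G(z∞). -/

import Mathlib

open RealInnerProductSpace Filter

/-!
The quantity `SFBS.energy` decreases along the iteration. Its decrease at the `k`-th step controls
the squared gap between consecutive residuals and `k` times the squared residual, and it dominates
`‖u k - w‖ ^ 2` for every zero `w`. Hence the anchors `u k` are bounded and the residuals tend to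
zero. The distance from the iterate to its anchor satisfies a recursion with contraction factors
`k / (k + r)` and summable perturbations; as `∑ r / (k + r)` diverges, `z k - u k` tends to zero.

The energies for two zeros `p` and `q` differ by a multiple of `‖u k - p‖ ^ 2 - ‖u k - q‖ ^ 2`, so
`⟪u k, p - q⟫` converges and Opial's argument yields weak convergence once all weak cluster points
are zeros. This demiclosedness needs `id + s • T` to be onto. Minty's theorem provides resolvents of
`G`: the reflected resolvent is nonexpansive on the range of `id + s • G`, Kirszbraun's one-point
extension (a separation of convex sets) extends it, and maximality puts the new point in the graph.
The Lipschitz term `s • F`, with constant `s * L < 1`, is then absorbed by Banach's fixed point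
theorem.
-/

open scoped Topology

section RealSequences

lemma exists_tendsto_of_add_le {E v : ℕ → ℝ} (hE : BddBelow (Set.range E)) (hv : ∀ k, 0 ≤ v k)
    (h : ∀ k, E (k + 1) + v k ≤ E k) : ∃ l, Tendsto E atTop (𝓝 l) := by
  have hanti : Antitone E := antitone_nat_of_succ_le fun k => by linarith [h k, hv k]
  exact ⟨_, tendsto_atTop_ciInf hanti hE⟩

lemma summable_of_add_le {E v : ℕ → ℝ} (hE : BddBelow (Set.range E)) (hv : ∀ k, 0 ≤ v k)
    (h : ∀ k, E (k + 1) + v k ≤ E k) : Summable v := by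
  obtain ⟨m, hm⟩ := hE
  refine summable_of_sum_range_le (c := E 0 - m) hv fun n => ?_
  have htelescope : ∑ i ∈ Finset.range n, v i ≤ E 0 - E n := by
    rw [← Finset.sum_range_sub']
    exact Finset.sum_le_sum fun i _ => by linarith [h i]
  linarith [hm (Set.mem_range_self n)]

lemma tendsto_zero_of_succ_le_one_sub_mul_add {x a v : ℕ → ℝ} (hx : ∀ k, 0 ≤ x k)
    (ha : ∀ k, 0 ≤ a k) (ha' : ¬ Summable a) (hv : ∀ k, 0 ≤ v k) (hv' : Summable v)
    (h : ∀ k, x (k + 1) ≤ (1 - a k) * x k + v k) : Tendsto x atTop (𝓝 0) := by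
  -- Adding the tail of `∑ v` to `x` absorbs the perturbation.
  set tail : ℕ → ℝ := fun k => ∑' i, v i - ∑ i ∈ Finset.range k, v i
  have htail : Tendsto tail atTop (𝓝 0) := by
    simpa [tail] using hv'.hasSum.tendsto_sum_nat.const_sub (∑' i, v i)
  have htail_nonneg (k) : 0 ≤ tail k :=
    sub_nonneg.2 (hv'.sum_le_tsum (Finset.range k) fun i _ => hv i)
  have hbdd : BddBelow (Set.range fun k => x k + tail k) :=
    ⟨0, Set.forall_mem_range.2 fun k => add_nonneg (hx k) (htail_nonneg k)⟩
  have hnonneg (k) : 0 ≤ a k * x k := mul_nonneg (ha k) (hx k)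
  have hdescent (k) : x (k + 1) + tail (k + 1) + a k * x k ≤ x k + tail k := by
    simp only [tail, Finset.sum_range_succ]
    linarith [h k]
  have hsum : Summable fun k => a k * x k := summable_of_add_le hbdd hnonneg hdescent
  obtain ⟨l, hl⟩ := exists_tendsto_of_add_le hbdd hnonneg hdescent
  have hxl : Tendsto x atTop (𝓝 l) := by simpa using hl.sub htail
  rcases (ge_of_tendsto' hxl hx).eq_or_lt with rfl | hl_pos
  · exact hxl
  refine absurd ((hsum.mul_left (2 / l)).of_norm_bounded_eventually_nat ?_) ha'
  filter_upwards [hxl.eventually (lt_mem_nhds (half_lt_self hl_pos))] with k hk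
  calc ‖a k‖ = 2 / l * (a k * (l / 2)) := by
        rw [Real.norm_of_nonneg (ha k)]
        field_simp
    _ ≤ 2 / l * (a k * x k) := by
        have := ha k
        gcongr

lemma not_summable_const_div_natCast_add {c : ℝ} (hc : c ≠ 0) {a : ℝ} (ha : 0 ≤ a) :
    ¬ Summable fun k : ℕ => c / ((k : ℝ) + a) := by
  have hharmonic : ¬ Summable fun k : ℕ => 1 / ((k : ℝ) + a) := by
    refine fun h => lt_irrefl (1 : ℝ) ((Real.summable_one_div_nat_add_rpow a 1).1 (h.congr ?_))
    intro k
    rw [Real.rpow_one, abs_of_nonneg (by positivity)]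
  simpa only [div_eq_mul_one_div c, summable_mul_left_iff hc] using hharmonic

end RealSequences

section SquaredNorm

variable {E : Type*} [SeminormedAddCommGroup E] [NormedSpace ℝ E]

lemma convexOn_sq_norm : ConvexOn ℝ Set.univ fun x : E => ‖x‖ ^ 2 :=
  (convexOn_norm convex_univ).pow (fun _ _ => norm_nonneg _) 2

lemma sq_norm_le_of_add_smul_eq {r t : ℝ} {d d' e : E} (hr : 0 < r) (ht : 0 ≤ t)
    (h : (t + r) • d' = t • d + e) :
    ‖d'‖ ^ 2 ≤ (1 - r / (t + r)) * ‖d‖ ^ 2 + ‖e‖ ^ 2 / (r * (t + r)) := by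
  have hweight : 1 - r / (t + r) = t / (t + r) := by field_simp; ring
  have hd' : d' = (t / (t + r)) • d + (r / (t + r)) • r⁻¹ • e := by
    rw [← inv_smul_smul₀ (by positivity : t + r ≠ 0) d', h]
    match_scalars <;> field_simp
  calc ‖d'‖ ^ 2
      ≤ t / (t + r) * ‖d‖ ^ 2 + r / (t + r) * ‖r⁻¹ • e‖ ^ 2 := by
        rw [hd']
        exact convexOn_sq_norm.2 trivial trivial (by positivity) (by positivity) (by field_simp)
    _ = (1 - r / (t + r)) * ‖d‖ ^ 2 + ‖e‖ ^ 2 / (r * (t + r)) := by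
        rw [hweight, norm_smul, mul_pow, norm_inv, Real.norm_of_nonneg hr.le]
        field_simp

end SquaredNorm

section Kirszbraun

variable {H E : Type*} [NormedAddCommGroup H] [InnerProductSpace ℝ H]
  [NormedAddCommGroup E] [InnerProductSpace ℝ E]

lemma sq_norm_sum_smul {ι : Type*} [Fintype ι] {w : ι → ℝ} (hw : ∑ i, w i = 1) (x : ι → H) :
    ‖∑ i, w i • x i‖ ^ 2 =
      ∑ i, w i * ‖x i‖ ^ 2 - (∑ i, ∑ j, w i * w j * ‖x i - x j‖ ^ 2) / 2 := by
  have hleft : ∑ i, ∑ j, w i * w j * ‖x i‖ ^ 2 = ∑ i, w i * ‖x i‖ ^ 2 :=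
    Finset.sum_congr rfl fun i _ => by rw [← Finset.sum_mul, ← Finset.mul_sum, hw, mul_one]
  have hright : ∑ i, ∑ j, w i * w j * ‖x j‖ ^ 2 = ∑ i, w i * ‖x i‖ ^ 2 := by
    rw [Finset.sum_comm, ← hleft]
    simp only [mul_comm]
  have hinner : ∑ i, ∑ j, w i * w j * ⟪x j, x i⟫ = ‖∑ i, w i • x i‖ ^ 2 := by
    simp only [← real_inner_self_eq_norm_sq, inner_sum, sum_inner, real_inner_smul_left,
      real_inner_smul_right, mul_assoc]
  have hexpand (i j) : w i * w j * ‖x i - x j‖ ^ 2 =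
      w i * w j * ‖x i‖ ^ 2 + w i * w j * ‖x j‖ ^ 2 - 2 * (w i * w j * ⟪x j, x i⟫) := by
    rw [norm_sub_sq_real, real_inner_comm]
    ring
  simp only [hexpand, Finset.sum_sub_distrib, Finset.sum_add_distrib, ← Finset.mul_sum,
    hleft, hright, hinner]
  ring

lemma sq_norm_sum_smul_add_nonneg {ι : Type*} [Fintype ι] {w : ι → ℝ} (hw₀ : ∀ i, 0 ≤ w i)
    (hw₁ : ∑ i, w i = 1) {c : ι → H} {d : ι → E} (h : ∀ i j, ‖c i - c j‖ ≤ ‖d i - d j‖) :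
    0 ≤ ‖∑ i, w i • c i‖ ^ 2 + ∑ i, w i * (‖d i‖ ^ 2 - ‖c i‖ ^ 2) := by
  have hspread : ∑ i, ∑ j, w i * w j * ‖c i - c j‖ ^ 2 ≤ ∑ i, ∑ j, w i * w j * ‖d i - d j‖ ^ 2 := by
    gcongr with i _ j _
    · exact mul_nonneg (hw₀ i) (hw₀ j)
    · exact h i j
  have hd := sq_norm_sum_smul hw₁ d
  simp only [sq_norm_sum_smul hw₁ c, mul_sub, Finset.sum_sub_distrib]
  linarith [sq_nonneg ‖∑ i, w i • d i‖]

lemma exists_forall_sq_norm_le_two_mul_inner_add [CompleteSpace H] {K : Set (H × ℝ)}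
    (hK : Convex ℝ K) (h : ∀ q ∈ K, 0 ≤ ‖q.1‖ ^ 2 + q.2) :
    ∃ x : H, ∀ q ∈ K, ‖x‖ ^ 2 ≤ 2 * ⟪x, q.1⟫ + q.2 := by
  rcases K.eq_empty_or_nonempty with rfl | ⟨q₀, hq₀⟩
  · exact ⟨0, by simp⟩
  -- Separate `K` from the open convex region strictly below the graph of `-‖·‖ ^ 2`.
  have hconvex : Convex ℝ {q : H × ℝ | q.1 ∈ Set.univ ∧ q.2 < -‖q.1‖ ^ 2} :=
    convexOn_sq_norm.neg.convex_strict_hypograph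
  have hopen : IsOpen {q : H × ℝ | q.1 ∈ Set.univ ∧ q.2 < -‖q.1‖ ^ 2} := by
    simpa using isOpen_lt continuous_snd (continuous_fst.norm.pow 2).neg
  have hdisj : Disjoint {q : H × ℝ | q.1 ∈ Set.univ ∧ q.2 < -‖q.1‖ ^ 2} K :=
    Set.disjoint_left.2 fun q hq hqK => by linarith [h q hqK, hq.2]
  obtain ⟨f, m, hbelow, habove⟩ := geometric_hahn_banach_open hconvex hopen hK hdisj
  set a : H := (InnerProductSpace.toDual ℝ H).symm (f ∘L .inl ℝ H ℝ)
  set b : ℝ := f (0, 1)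
  have hf (c : H) (t : ℝ) : f (c, t) = ⟪a, c⟫ + b * t := by
    have hsplit : ((c, t) : H × ℝ) = (c, 0) + t • (0, 1) := by simp
    rw [hsplit, map_add, map_smul, InnerProductSpace.toDual_symm_apply, smul_eq_mul, mul_comm]
    rfl
  have hb : 0 < b := by
    have hlt := (hbelow (q₀.1, -‖q₀.1‖ ^ 2 - 1) ⟨trivial, by simp⟩).trans_le (habove q₀ hq₀)
    rw [hf, ← Prod.mk.eta (p := q₀), hf] at hlt
    nlinarith [h q₀ hq₀]
  obtain ⟨x, hx⟩ : ∃ x, a = (2 * b) • x := ⟨(2 * b)⁻¹ • a, by rw [smul_inv_smul₀ (by positivity)]⟩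
  refine ⟨x, fun q hq => le_of_forall_lt_imp_le_of_dense fun t ht => ?_⟩
  have hlt := (hbelow (x, t - 2 * ‖x‖ ^ 2) ⟨trivial, by linarith⟩).trans_le (habove q hq)
  rw [hf, ← Prod.mk.eta (p := q), hf, hx, real_inner_smul_left, real_inner_smul_left,
    real_inner_self_eq_norm_sq] at hlt
  refine (lt_of_mul_lt_mul_left ?_ hb.le).le
  linarith

/-- The one-point extension step of the Kirszbraun–Valentine theorem. -/
lemma exists_forall_norm_sub_le [CompleteSpace H] {ι : Type*} {c : ι → H} {d : ι → E}
    (h : ∀ i j, ‖c i - c j‖ ≤ ‖d i - d j‖) (p : E) : ∃ x, ∀ i, ‖x - c i‖ ≤ ‖p - d i‖ := by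
  set K : Set (H × ℝ) :=
    convexHull ℝ (Set.range fun i => (c i, ‖p - d i‖ ^ 2 - ‖c i‖ ^ 2))
  have hK : ∀ q ∈ K, 0 ≤ ‖q.1‖ ^ 2 + q.2 := by
    intro q hq
    obtain ⟨κ, _, w, y, hw₀, hw₁, hy, rfl⟩ := mem_convexHull_iff_exists_fintype.1 hq
    choose i hi using hy
    simp only [← hi, Prod.fst_sum, Prod.snd_sum, Prod.smul_fst, Prod.smul_snd, smul_eq_mul]
    exact sq_norm_sum_smul_add_nonneg (d := fun j => p - d (i j)) hw₀ hw₁ fun j j' => by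
      simpa [norm_sub_rev] using h (i j) (i j')
  obtain ⟨x, hx⟩ := exists_forall_sq_norm_le_two_mul_inner_add (convex_convexHull ℝ _) hK
  refine ⟨x, fun i => le_of_sq_le_sq ?_ (norm_nonneg _)⟩
  have := hx _ (subset_convexHull ℝ _ (Set.mem_range_self i))
  rw [norm_sub_sq_real]
  linarith

end Kirszbraun

section MonotoneOperators

variable {H : Type*} [NormedAddCommGroup H] [InnerProductSpace ℝ H]

/-- `ρ`-comonotonicity of a set-valued operator; for `ρ = 0` this is monotonicity. -/
def IsComonotone (ρ : ℝ) (T : H → Set H) : Prop :=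
  ∀ ⦃x y a b⦄, a ∈ T x → b ∈ T y → ρ * ‖a - b‖ ^ 2 ≤ ⟪a - b, x - y⟫

/-- Maximal monotonicity of a set-valued operator: its graph is monotone and contains every pair
monotonically related to it. -/
structure IsMaximalMonotone (G : H → Set H) : Prop where
  isComonotone_zero : IsComonotone 0 G
  mem_of_forall_inner_nonneg :
    ∀ ⦃x w⦄, (∀ y h, h ∈ G y → 0 ≤ ⟪w - h, x - y⟫) → w ∈ G x

lemma IsComonotone.mul_sq_norm_le_inner {ρ : ℝ} {T : H → Set H} (hT : IsComonotone ρ T) {x a w : H}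
    (ha : a ∈ T x) (hw : 0 ∈ T w) : ρ * ‖a‖ ^ 2 ≤ ⟪a, x - w⟫ := by
  simpa using hT ha hw

lemma norm_sub_le_norm_add_of_inner_nonneg {x y : H} (h : 0 ≤ ⟪x, y⟫) : ‖x - y‖ ≤ ‖x + y‖ := by
  refine le_of_sq_le_sq ?_ (norm_nonneg _)
  rw [norm_sub_sq_real, norm_add_sq_real]
  linarith

lemma norm_le_norm_add_of_inner_nonneg {x y : H} (h : 0 ≤ ⟪x, y⟫) : ‖x‖ ≤ ‖x + y‖ := by
  refine le_of_sq_le_sq ?_ (norm_nonneg _)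
  rw [norm_add_sq_real]
  linarith [sq_nonneg ‖y‖]

variable {G : H → Set H} {s : ℝ} {x y g h : H}

lemma IsComonotone.inner_smul_nonneg (hG : IsComonotone 0 G) (hs : 0 ≤ s) (hg : g ∈ G x)
    (hh : h ∈ G y) : 0 ≤ ⟪x - y, s • (g - h)⟫ := by
  rw [real_inner_smul_right, real_inner_comm]
  exact mul_nonneg hs (by simpa using hG hg hh)

lemma IsComonotone.norm_sub_smul_sub_le (hG : IsComonotone 0 G) (hs : 0 ≤ s) (hg : g ∈ G x)
    (hh : h ∈ G y) : ‖(x - s • g) - (y - s • h)‖ ≤ ‖(x + s • g) - (y + s • h)‖ := by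
  convert norm_sub_le_norm_add_of_inner_nonneg (hG.inner_smul_nonneg hs hg hh) using 2 <;> module

lemma IsComonotone.norm_sub_le (hG : IsComonotone 0 G) (hs : 0 ≤ s) (hg : g ∈ G x)
    (hh : h ∈ G y) : ‖x - y‖ ≤ ‖(x + s • g) - (y + s • h)‖ := by
  convert norm_le_norm_add_of_inner_nonneg (hG.inner_smul_nonneg hs hg hh) using 2
  module

namespace IsMaximalMonotone

/-- Minty's theorem. The map `y + s • h ↦ y - s • h` over the graph of `G` (the reflected resolvent)
is nonexpansive; it is extended to `p`. -/
lemma exists_add_smul_eq [CompleteSpace H] (hG : IsMaximalMonotone G) (hs : 0 < s) (p : H) :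
    ∃ y, ∃ h ∈ G y, y + s • h = p := by
  obtain ⟨ξ, hξ⟩ := exists_forall_norm_sub_le
    (c := fun q : {q : H × H // q.2 ∈ G q.1} => q.1.1 - s • q.1.2)
    (d := fun q => q.1.1 + s • q.1.2)
    (fun q q' => hG.isComonotone_zero.norm_sub_smul_sub_le hs.le q.2 q'.2) p
  set x : H := (2 : ℝ)⁻¹ • (ξ + p)
  refine ⟨x, s⁻¹ • (p - x), hG.mem_of_forall_inner_nonneg fun y h hh => ?_, ?_⟩
  · set α : H := p - (y + s • h)
    set β : H := ξ - (y - s • h)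
    have hgraph : s⁻¹ • (p - x) - h = (2 * s)⁻¹ • (α - β) := by
      simp only [x, α, β]
      match_scalars <;> field_simp <;> ring
    have hpoint : x - y = (2 : ℝ)⁻¹ • (α + β) := by
      simp only [x, α, β]
      module
    have hinner : ⟪α - β, α + β⟫ = ‖α‖ ^ 2 - ‖β‖ ^ 2 := by
      simp only [inner_sub_left, inner_add_right, real_inner_self_eq_norm_sq,
        real_inner_comm β α]
      ring
    rw [hgraph, hpoint, real_inner_smul_left, real_inner_smul_right, hinner]
    have hle : ‖β‖ ^ 2 ≤ ‖α‖ ^ 2 := by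
      gcongr
      exact hξ ⟨(y, h), hh⟩
    have := sub_nonneg.2 hle
    positivity
  · rw [smul_inv_smul₀ hs.ne', add_sub_cancel]

lemma exists_add_smul_add_eq [CompleteSpace H] (hG : IsMaximalMonotone G) {F : H → H} {L : ℝ}
    (hF : ∀ x y, ‖F x - F y‖ ≤ L * ‖x - y‖) (hL : 0 ≤ L) (hs : 0 < s) (hsL : s * L < 1) (p : H) :
    ∃ y, ∃ h ∈ G y, y + s • (F y + h) = p := by
  choose J g hg hJ using hG.exists_add_smul_eq hs
  -- `J` is the resolvent of `s • G`, so the sought `y` is a fixed point of `y ↦ J (p - s • F y)`.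
  have hcontr : ContractingWith ⟨s * L, by positivity⟩ fun y => J (p - s • F y) := by
    refine ⟨mod_cast hsL, .of_dist_le_mul fun x y => ?_⟩
    rw [dist_eq_norm, dist_eq_norm]
    calc ‖J (p - s • F x) - J (p - s • F y)‖
        ≤ ‖(p - s • F x) - (p - s • F y)‖ := by
          simpa only [hJ] using
            hG.isComonotone_zero.norm_sub_le hs.le (hg (p - s • F x)) (hg (p - s • F y))
      _ = s * ‖F x - F y‖ := by
          rw [sub_sub_sub_cancel_left, ← smul_sub, norm_smul, Real.norm_of_nonneg hs.le,
            norm_sub_rev]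
      _ ≤ s * (L * ‖x - y‖) := by
          gcongr
          exact hF x y
      _ = s * L * ‖x - y‖ := by ring
  obtain ⟨y, hy⟩ : ∃ y, J (p - s • F y) = y := ⟨_, hcontr.fixedPoint_isFixedPt⟩
  have hgy := hg (p - s • F y)
  have hJy := hJ (p - s • F y)
  rw [hy] at hgy hJy
  exact ⟨y, g (p - s • F y), hgy, by rw [smul_add, add_left_comm, hJy, add_sub_cancel]⟩

end IsMaximalMonotone

end MonotoneOperators

section WeakConvergence

variable {H ι : Type*} [NormedAddCommGroup H] [InnerProductSpace ℝ H] {f : Filter ι}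

/-- Weak convergence of `u` to `p` along the filter `f`, tested against vectors of `H`. -/
def WeakTendsto (u : ι → H) (f : Filter ι) (p : H) : Prop :=
  ∀ y, Tendsto (fun k => ⟪u k, y⟫) f (𝓝 ⟪p, y⟫)

lemma tendsto_inner_zero_of_isBoundedUnder {u v : ι → H} (hu : Tendsto u f (𝓝 0))
    (hv : IsBoundedUnder (· ≤ ·) f (norm ∘ v)) : Tendsto (fun k => ⟪u k, v k⟫) f (𝓝 0) :=
  hu.op_zero_isBoundedUnder_le hv (fun x y => ⟪x, y⟫) norm_inner_le_norm

lemma WeakTendsto.of_tendsto_sub {u v : ι → H} {p : H} (hu : WeakTendsto u f p)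
    (h : Tendsto (fun k => v k - u k) f (𝓝 0)) : WeakTendsto v f p := by
  intro y
  have hdiff : Tendsto (fun k => ⟪v k - u k, y⟫) f (𝓝 0) := by
    simpa using h.inner (tendsto_const_nhds (x := y))
  simpa [inner_sub_left] using hdiff.add (hu y)

lemma exists_weakTendsto_ultrafilter [CompleteSpace H] {u : ι → H} {U : Ultrafilter ι}
    (hu : IsBoundedUnder (· ≤ ·) (U : Filter ι) (norm ∘ u)) : ∃ p, WeakTendsto u U p := by
  obtain ⟨C, hC⟩ := hu
  set φ : ι → WeakDual ℝ H :=
    fun k => StrongDual.toWeakDual (InnerProductSpace.toDual ℝ H (u k)) with hφ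
  have hmem : (U.map φ : Filter (WeakDual ℝ H)) ≤
      𝓟 (WeakDual.toStrongDual ⁻¹' Metric.closedBall 0 C) := by
    rw [le_principal_iff, Ultrafilter.coe_map, mem_map]
    filter_upwards [eventually_map.1 hC] with k hk
    simpa [hφ] using hk
  obtain ⟨ψ, -, hψ⟩ := (WeakDual.isCompact_closedBall 0 C).ultrafilter_le_nhds (U.map φ) hmem
  refine ⟨(InnerProductSpace.toDual ℝ H).symm (WeakDual.toStrongDual ψ), fun y => ?_⟩
  rw [InnerProductSpace.toDual_symm_apply]
  exact ((WeakDual.eval_continuous y).tendsto ψ).comp hψ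

/-- A form of Opial's lemma that asks for convergence of `⟪u k, p - q⟫` only, which follows from
convergence of `‖u k - p‖` for `p ∈ S`. -/
lemma exists_weakTendsto_of_forall_ultrafilter_mem [CompleteSpace H] [f.NeBot] {u : ι → H}
    {S : Set H} (hu : IsBoundedUnder (· ≤ ·) f (norm ∘ u))
    (hS : ∀ (U : Ultrafilter ι) (p : H), ↑U ≤ f → WeakTendsto u U p → p ∈ S)
    (hdiff : ∀ p ∈ S, ∀ q ∈ S, ∃ l, Tendsto (fun k => ⟪u k, p - q⟫) f (𝓝 l)) :
    ∃ p ∈ S, WeakTendsto u f p := by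
  have hcluster (U : Ultrafilter ι) (hU : ↑U ≤ f) : ∃ p ∈ S, WeakTendsto u U p :=
    have ⟨p, hp⟩ := exists_weakTendsto_ultrafilter (hu.mono hU)
    ⟨p, hS U p hU hp, hp⟩
  obtain ⟨p, hpS, hp⟩ := hcluster (.of f) (Ultrafilter.of_le f)
  refine ⟨p, hpS, fun y => tendsto_iff_ultrafilter _ _ _ |>.2 fun U hU => ?_⟩
  obtain ⟨q, hqS, hq⟩ := hcluster U hU
  obtain ⟨l, hl⟩ := hdiff p hpS q hqS
  have hpl : ⟪p, p - q⟫ = l :=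
    tendsto_nhds_unique (hp (p - q)) (hl.mono_left (Ultrafilter.of_le f))
  have hql : ⟪q, p - q⟫ = l := tendsto_nhds_unique (hq (p - q)) (hl.mono_left hU)
  have hpq : p = q := by
    rw [← sub_eq_zero, ← inner_self_eq_zero (𝕜 := ℝ), inner_sub_left, hpl, hql, sub_self]
  exact hpq ▸ hq y

lemma IsComonotone.zero_mem_of_weakTendsto [f.NeBot] {T : H → Set H} {ρ s : ℝ}
    (hT : IsComonotone ρ T) (hsρ : 0 < s + ρ) (hrange : ∀ p, ∃ y, ∃ a ∈ T y, y + s • a = p)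
    {z A : ι → H} {p : H} (hA : ∀ k, A k ∈ T (z k)) (hA₀ : Tendsto A f (𝓝 0))
    (hz : IsBoundedUnder (· ≤ ·) f (norm ∘ z)) (hzp : WeakTendsto z f p) : 0 ∈ T p := by
  -- In the limit, comonotonicity at `(y, a)` with `y + s • a = p` reads `(s + ρ) * ‖a‖ ^ 2 ≤ 0`.
  obtain ⟨y, a, ha, hp⟩ := hrange p
  have hleft : Tendsto (fun k => ρ * ‖A k - a‖ ^ 2) f (𝓝 (ρ * ‖a‖ ^ 2)) := by
    simpa using ((hA₀.sub_const a).norm.pow 2).const_mul ρ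
  have hright : Tendsto (fun k => ⟪A k - a, z k - y⟫) f (𝓝 (-⟪a, p - y⟫)) := by
    have hAz := tendsto_inner_zero_of_isBoundedUnder hA₀ hz
    have hAy : Tendsto (fun k => ⟪A k, y⟫) f (𝓝 0) := by
      simpa using hA₀.inner (tendsto_const_nhds (x := y))
    have hlim := (hAz.sub hAy).sub ((hzp a).sub_const ⟪y, a⟫)
    rw [sub_zero, zero_sub, ← inner_sub_left, real_inner_comm a (p - y)] at hlim
    refine hlim.congr fun k => ?_
    simp only [inner_sub_left, inner_sub_right, real_inner_comm a]
    ring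
  have hlimit : ρ * ‖a‖ ^ 2 ≤ -⟪a, p - y⟫ :=
    le_of_tendsto_of_tendsto' hleft hright fun k => hT (hA k) ha
  have ha₀ : a = 0 := by
    rw [← hp, add_sub_cancel_left, real_inner_smul_right, real_inner_self_eq_norm_sq] at hlimit
    rw [← norm_eq_zero, ← sq_eq_zero_iff]
    nlinarith [sq_nonneg ‖a‖]
  rwa [← hp, ha₀, smul_zero, add_zero, ← ha₀]

end WeakConvergence

namespace SFBS

section Scheme

/-- The parameters of the scheme: step size `s`, comonotonicity modulus `ρ`, anchoring weight `r`,
anchor step `η` and relative error `κ`. -/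
structure IsAdmissible (s ρ r η κ : ℝ) : Prop where
  step_pos : 0 < s
  shifted_step_pos : 0 < s + 2 * ρ
  one_lt_weight : 1 < r
  anchor_pos : 0 < η
  anchor_mul_lt : η * r < (r - 1) * (s + 2 * ρ)
  error_nonneg : 0 ≤ κ
  error_lt_one : κ < 1

variable {s ρ r η κ t : ℝ}

lemma IsAdmissible.weight_pos (h : IsAdmissible s ρ r η κ) : 0 < r :=
  one_pos.trans h.one_lt_weight

lemma IsAdmissible.one_sub_sq_error_pos (h : IsAdmissible s ρ r η κ) : 0 < 1 - κ ^ 2 :=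
  sub_pos.2 (pow_lt_one₀ h.error_nonneg h.error_lt_one two_ne_zero)

lemma IsAdmissible.coercivity_pos (h : IsAdmissible s ρ r η κ) :
    0 < r * ((r - 1) * (s + 2 * ρ) - η * r) / (2 * η * (s + 2 * ρ)) :=
  div_pos (mul_pos h.weight_pos (sub_pos.2 h.anchor_mul_lt))
    (mul_pos (mul_pos two_pos h.anchor_pos) h.shifted_step_pos)

variable {H : Type*} [NormedAddCommGroup H] [NormedSpace ℝ H]

/-- The weighted difference between the residual `A` of an iterate and the residual `B` of the
extrapolation that follows it. In the SFBS method `(k + r) • (z_{k+1} - z_{k+1/2})` is `s` times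
the `k`-th gap. -/
def gap (r t : ℝ) (A B : H) : H := t • A - (t + r) • B

/-- The perturbation in the recursion `(t + r) • (z' - u') = t • (z - u) + drift` satisfied by the
distance of the iterate to the anchor. -/
def drift (s ρ r η t : ℝ) (A B A' : H) : H :=
  (s + 2 * ρ) • (t + r) • (A' - B) - (2 * ρ) • gap r t A B + ((η - (s + 2 * ρ)) * (t + r)) • A'

/-- The SFBS iteration for a set-valued operator `T`: `A k ∈ T (z k)` is the residual of the `k`-th
iterate, and `B k` stands for the residual at the extrapolated point `z_{k+1/2}`, of which only its
distance to `A (k + 1)` matters. The update of `z` is multiplied by `k + r`. -/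
structure IsIteration (T : H → Set H) (s ρ r η κ : ℝ) (z u A B : ℕ → H) : Prop where
  residual_mem : ∀ k, A k ∈ T (z k)
  smul_succ : ∀ k : ℕ, ((k : ℝ) + r) • z (k + 1) =
    (k : ℝ) • z k + r • u k - (s * ((k : ℝ) + r)) • B k - (2 * ρ * (k : ℝ)) • A k
  anchor_succ : ∀ k, u (k + 1) = u k - η • A (k + 1)
  error_le : ∀ k : ℕ, ‖((k : ℝ) + r) • (A (k + 1) - B k)‖ ≤ κ * ‖gap r k (A k) (B k)‖

lemma isIteration_of_lipschitz {L ρ s r D : ℝ} {F : H → H} {G : H → Set H} {z zh zt u Gt : ℕ → H}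
    (hLip : ∀ x y, ‖F x - F y‖ ≤ L * ‖x - y‖) (hs : 0 ≤ s) (hr : 0 < r)
    (hGt : ∀ k, Gt k ∈ G (z k))
    (hzt : ∀ k : ℕ, zt (k + 1) = ((k : ℝ) / ((k : ℝ) + r)) • z k + (r / ((k : ℝ) + r)) • u k)
    (hzh : ∀ k : ℕ, zh k =
      zt (k + 1) - ((k : ℝ) / ((k : ℝ) + r) * (s + 2 * ρ)) • (F (z k) + Gt k))
    (hz : ∀ k : ℕ, z (k + 1) = zt (k + 1) - s • (F (zh k) + Gt (k + 1))
      - ((2 * ρ * (k : ℝ)) / ((k : ℝ) + r)) • (F (z k) + Gt k))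
    (hu : ∀ k, u (k + 1) = u k - (D / r) • (F (z (k + 1)) + Gt (k + 1))) :
    IsIteration (fun x => (F x + ·) '' G x) s ρ r (D / r) (s * L) z u
      (fun k => F (z k) + Gt k) (fun k => F (zh k) + Gt (k + 1)) where
  residual_mem k := ⟨Gt k, hGt k, rfl⟩
  smul_succ k := by
    rw [hz, hzt]
    match_scalars <;> field_simp
  anchor_succ := hu
  error_le k := by
    have hkr : 0 < (k : ℝ) + r := by positivity
    have hgap : ((k : ℝ) + r) • (z (k + 1) - zh k) =
        s • gap r k (F (z k) + Gt k) (F (zh k) + Gt (k + 1)) := by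
      rw [hz, hzh, gap]
      match_scalars <;> field_simp <;> ring
    have hnorm := congrArg norm hgap
    rw [norm_smul, norm_smul, Real.norm_of_nonneg hkr.le, Real.norm_of_nonneg hs] at hnorm
    calc ‖((k : ℝ) + r) • (F (z (k + 1)) + Gt (k + 1) - (F (zh k) + Gt (k + 1)))‖
        = ((k : ℝ) + r) * ‖F (z (k + 1)) - F (zh k)‖ := by
          rw [add_sub_add_right_eq_sub, norm_smul, Real.norm_of_nonneg hkr.le]
      _ ≤ ((k : ℝ) + r) * (L * ‖z (k + 1) - zh k‖) := by
          gcongr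
          exact hLip _ _
      _ = s * L * ‖gap r k (F (z k) + Gt k) (F (zh k) + Gt (k + 1))‖ := by
          rw [mul_left_comm, hnorm]
          ring

variable {A B A' z z' u : H}

lemma add_smul_sub_anchor
    (hz : (t + r) • z' = t • z + r • u - (s * (t + r)) • B - (2 * ρ * t) • A) :
    (t + r) • (z' - (u - η • A')) = t • (z - u) + drift s ρ r η t A B A' := by
  rw [smul_sub, hz, drift, gap]
  module

lemma norm_drift_le (h : IsAdmissible s ρ r η κ) (ht : 0 ≤ t)
    (herror : ‖(t + r) • (A' - B)‖ ≤ κ * ‖gap r t A B‖) :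
    ‖drift s ρ r η t A B A'‖ ≤
      (s + 2 * ρ + |2 * ρ|) * ‖gap r t A B‖ + |η - (s + 2 * ρ)| * (t + r) * ‖A'‖ := by
  have htr : 0 ≤ t + r := add_nonneg ht h.weight_pos.le
  have hσ := h.shifted_step_pos
  have herror' : ‖(t + r) • (A' - B)‖ ≤ ‖gap r t A B‖ :=
    herror.trans (mul_le_of_le_one_left (norm_nonneg _) h.error_lt_one.le)
  calc ‖drift s ρ r η t A B A'‖
      ≤ ‖(s + 2 * ρ) • (t + r) • (A' - B)‖ + ‖(2 * ρ) • gap r t A B‖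
          + ‖((η - (s + 2 * ρ)) * (t + r)) • A'‖ :=
        (norm_add_le _ _).trans (by gcongr; exact norm_sub_le _ _)
    _ = (s + 2 * ρ) * ‖(t + r) • (A' - B)‖ + |2 * ρ| * ‖gap r t A B‖
          + |η - (s + 2 * ρ)| * (t + r) * ‖A'‖ := by
        rw [norm_smul, norm_smul (2 * ρ), norm_smul (_ * _), Real.norm_of_nonneg hσ.le,
          norm_mul (η - _), Real.norm_of_nonneg htr, Real.norm_eq_abs, Real.norm_eq_abs]
    _ ≤ (s + 2 * ρ) * ‖gap r t A B‖ + |2 * ρ| * ‖gap r t A B‖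
          + |η - (s + 2 * ρ)| * (t + r) * ‖A'‖ := by gcongr
    _ = _ := by ring

lemma sq_norm_drift_div_le (h : IsAdmissible s ρ r η κ) (ht : 0 ≤ t)
    (herror : ‖(t + r) • (A' - B)‖ ≤ κ * ‖gap r t A B‖) :
    ‖drift s ρ r η t A B A'‖ ^ 2 / (r * (t + r)) ≤
      2 * (s + 2 * ρ + |2 * ρ|) ^ 2 / r * ‖gap r t A B‖ ^ 2
        + 2 * (η - (s + 2 * ρ)) ^ 2 / r * ((t + r) * ‖A'‖ ^ 2) := by
  have hr := h.weight_pos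
  have htr : 1 ≤ t + r := by linarith [h.one_lt_weight]
  calc ‖drift s ρ r η t A B A'‖ ^ 2 / (r * (t + r))
      ≤ 2 * (((s + 2 * ρ + |2 * ρ|) * ‖gap r t A B‖) ^ 2
          + (|η - (s + 2 * ρ)| * (t + r) * ‖A'‖) ^ 2) / (r * (t + r)) := by
        gcongr
        exact (pow_le_pow_left₀ (norm_nonneg _) (norm_drift_le h ht herror) 2).trans add_sq_le
    _ = 2 * (s + 2 * ρ + |2 * ρ|) ^ 2 / r * ‖gap r t A B‖ ^ 2 / (t + r)
          + 2 * (η - (s + 2 * ρ)) ^ 2 / r * ((t + r) * ‖A'‖ ^ 2) := by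
        simp only [mul_pow, sq_abs]
        field_simp
    _ ≤ _ := by
        gcongr
        exact div_le_self (by positivity) htr

lemma sq_norm_sub_anchor_le (h : IsAdmissible s ρ r η κ) (ht : 0 ≤ t)
    (hz : (t + r) • z' = t • z + r • u - (s * (t + r)) • B - (2 * ρ * t) • A)
    (herror : ‖(t + r) • (A' - B)‖ ≤ κ * ‖gap r t A B‖) :
    ‖z' - (u - η • A')‖ ^ 2 ≤ (1 - r / (t + r)) * ‖z - u‖ ^ 2
      + (2 * (s + 2 * ρ + |2 * ρ|) ^ 2 / r * ‖gap r t A B‖ ^ 2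
        + 2 * (η - (s + 2 * ρ)) ^ 2 / r * ((t + r) * ‖A'‖ ^ 2)) :=
  (sq_norm_le_of_add_smul_eq h.weight_pos ht (add_smul_sub_anchor hz)).trans
    (add_le_add_right (sq_norm_drift_div_le h ht herror) _)

end Scheme

section Energy

variable {H : Type*} [NormedAddCommGroup H] [InnerProductSpace ℝ H]

/-- The Lyapunov function of the scheme at time `t`, for the iterate `z` with residual `A`, the
anchor `u` and the zero `w`. -/
noncomputable def energy (s ρ r η t : ℝ) (A z u w : H) : ℝ :=
  r * t * ⟪A, z - u⟫ + (s / 2 * t ^ 2 + ρ * t * (t - r)) * ‖A‖ ^ 2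
    + r * (r - 1) / (2 * η) * ‖u - w‖ ^ 2

/-- The energy lost between times `t` and `t + 1`, where `A'` is the residual after the step and
`B` that of the extrapolation. -/
noncomputable def dissipation (s ρ r η κ t : ℝ) (A B A' : H) : ℝ :=
  ((r - 1) * (s + 2 * ρ) - η * r) * (t + (r + 1) / 2) * ‖A'‖ ^ 2
    + s / 2 * (1 - κ ^ 2) * ‖gap r t A B‖ ^ 2

variable {s ρ r η κ t : ℝ} {A B A' z z' u w : H}

lemma mul_sq_norm_gap_le_dissipation (h : IsAdmissible s ρ r η κ) (ht : 0 ≤ t) :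
    s / 2 * (1 - κ ^ 2) * ‖gap r t A B‖ ^ 2 ≤ dissipation s ρ r η κ t A B A' := by
  have hr := h.weight_pos
  have hδ := sub_pos.2 h.anchor_mul_lt
  exact le_add_of_nonneg_left (by positivity)

lemma mul_sq_norm_residual_le_dissipation (h : IsAdmissible s ρ r η κ) (ht : 0 ≤ t) :
    ((r - 1) * (s + 2 * ρ) - η * r) / 2 * ((t + r) * ‖A'‖ ^ 2)
      ≤ dissipation s ρ r η κ t A B A' := by
  have hδ := sub_pos.2 h.anchor_mul_lt
  have hμ := mul_pos (half_pos h.step_pos) h.one_sub_sq_error_pos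
  calc ((r - 1) * (s + 2 * ρ) - η * r) / 2 * ((t + r) * ‖A'‖ ^ 2)
      = ((r - 1) * (s + 2 * ρ) - η * r) * ((t + r) / 2) * ‖A'‖ ^ 2 := by ring
    _ ≤ ((r - 1) * (s + 2 * ρ) - η * r) * (t + (r + 1) / 2) * ‖A'‖ ^ 2 := by
        gcongr
        linarith
    _ ≤ dissipation s ρ r η κ t A B A' := le_add_of_nonneg_right (by positivity)

lemma dissipation_nonneg (h : IsAdmissible s ρ r η κ) (ht : 0 ≤ t) :
    0 ≤ dissipation s ρ r η κ t A B A' := by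
  have hs := h.step_pos
  have hμ := h.one_sub_sq_error_pos
  exact le_trans (by positivity) (mul_sq_norm_gap_le_dissipation h ht)

lemma energy_sub_energy_add_one (hη : η ≠ 0)
    (hz : (t + r) • z' = t • z + r • u - (s * (t + r)) • B - (2 * ρ * t) • A) :
    energy s ρ r η t A z u w - energy s ρ r η (t + 1) A' z' (u - η • A') w =
      ((r - 1) * (s + 2 * ρ) - η * r) * (t + (r + 1) / 2) * ‖A'‖ ^ 2
        + s / 2 * (‖gap r t A B‖ ^ 2 - ‖(t + r) • (A' - B)‖ ^ 2)
        + t * (t + r) * (⟪A' - A, z' - z⟫ - ρ * ‖A' - A‖ ^ 2)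
        + r * (r - 1) * (⟪A', z' - w⟫ - ρ * ‖A'‖ ^ 2) := by
  obtain ⟨c, hc⟩ : ∃ c, r * (r - 1) / (2 * η) = c := ⟨_, rfl⟩
  have hcη : r * (r - 1) = 2 * η * c := by rw [← hc]; field_simp
  have hzA := congrArg (fun x => ⟪x, A⟫) hz
  have hzA' := congrArg (fun x => ⟪x, A'⟫) hz
  simp only [energy, gap, hc, ← real_inner_self_eq_norm_sq]
  simp only [inner_sub_left, inner_sub_right, inner_add_left, real_inner_smul_left,
    real_inner_smul_right] at hzA hzA' ⊢
  simp only [real_inner_comm A' A, real_inner_comm B A', real_inner_comm B A, real_inner_comm A' z',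
    real_inner_comm A z', real_inner_comm A' z, real_inner_comm A z, real_inner_comm A' u,
    real_inner_comm A u, real_inner_comm A' w, real_inner_comm w u]
    at hzA hzA' ⊢
  linear_combination t * hzA - (t + r) * hzA' + (η * ⟪A', A'⟫ / 2 - ⟪A', u⟫ + ⟪A', w⟫) * hcη

lemma energy_add_one_add_dissipation_le (h : IsAdmissible s ρ r η κ) (ht : 0 ≤ t)
    (hz : (t + r) • z' = t • z + r • u - (s * (t + r)) • B - (2 * ρ * t) • A)
    (herror : ‖(t + r) • (A' - B)‖ ≤ κ * ‖gap r t A B‖)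
    (hmono : ρ * ‖A' - A‖ ^ 2 ≤ ⟪A' - A, z' - z⟫) (hzero : ρ * ‖A'‖ ^ 2 ≤ ⟪A', z' - w⟫) :
    energy s ρ r η (t + 1) A' z' (u - η • A') w + dissipation s ρ r η κ t A B A'
      ≤ energy s ρ r η t A z u w := by
  have hr := h.weight_pos
  have hsq : ‖(t + r) • (A' - B)‖ ^ 2 ≤ κ ^ 2 * ‖gap r t A B‖ ^ 2 := by
    rw [← mul_pow]
    gcongr
  have hgap := mul_le_mul_of_nonneg_left hsq (half_pos h.step_pos).le
  have hmono_term := mul_nonneg (mul_nonneg ht (add_nonneg ht hr.le)) (sub_nonneg.2 hmono)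
  have hzero_term := mul_nonneg (mul_nonneg hr.le (sub_nonneg.2 h.one_lt_weight.le))
    (sub_nonneg.2 hzero)
  have hdecrease := energy_sub_energy_add_one (A' := A') (w := w) h.anchor_pos.ne' hz
  unfold dissipation
  linarith

lemma energy_eq (hη : η ≠ 0) (hσ : s + 2 * ρ ≠ 0) :
    energy s ρ r η t A z u w =
      r * ((r - 1) * (s + 2 * ρ) - η * r) / (2 * η * (s + 2 * ρ)) * ‖u - w‖ ^ 2
        + r * t * (⟪A, z - w⟫ - ρ * ‖A‖ ^ 2)
        + (2 * (s + 2 * ρ))⁻¹ * ‖(t * (s + 2 * ρ)) • A - r • (u - w)‖ ^ 2 := by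
  have hsplit : ⟪A, z - u⟫ = ⟪A, z - w⟫ - ⟪A, u - w⟫ := by
    rw [← inner_sub_right, sub_sub_sub_cancel_right]
  rw [energy, hsplit, norm_sub_sq_real (_ • A), norm_smul, norm_smul, mul_pow, mul_pow,
    real_inner_smul_left, real_inner_smul_right, Real.norm_eq_abs, Real.norm_eq_abs, sq_abs, sq_abs]
  field_simp
  ring

lemma mul_sq_norm_sub_le_energy (h : IsAdmissible s ρ r η κ) (ht : 0 ≤ t)
    (hzero : ρ * ‖A‖ ^ 2 ≤ ⟪A, z - w⟫) :
    r * ((r - 1) * (s + 2 * ρ) - η * r) / (2 * η * (s + 2 * ρ)) * ‖u - w‖ ^ 2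
      ≤ energy s ρ r η t A z u w := by
  have hr := h.weight_pos
  have hσ := h.shifted_step_pos
  have hzero_term := mul_nonneg (mul_nonneg hr.le ht) (sub_nonneg.2 hzero)
  have hsquare : 0 ≤ (2 * (s + 2 * ρ))⁻¹ * ‖(t * (s + 2 * ρ)) • A - r • (u - w)‖ ^ 2 := by
    positivity
  rw [energy_eq h.anchor_pos.ne' hσ.ne']
  linarith

lemma inner_sub_eq_energy_sub_energy (hr : r * (r - 1) ≠ 0) (hη : η ≠ 0) (p q : H) :
    ⟪u, p - q⟫ = η / (r * (r - 1)) *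
        (energy s ρ r η t A z u q - energy s ρ r η t A z u p)
      + (‖p‖ ^ 2 - ‖q‖ ^ 2) / 2 := by
  have hr₀ : r ≠ 0 := left_ne_zero_of_mul hr
  have hr₁ : r - 1 ≠ 0 := right_ne_zero_of_mul hr
  simp only [energy, norm_sub_sq_real u, inner_sub_right u p q]
  field_simp
  ring

end Energy

namespace IsIteration

variable {H : Type*} [NormedAddCommGroup H] [InnerProductSpace ℝ H] {T : H → Set H}
  {s ρ r η κ : ℝ} {z u A B : ℕ → H} {w : H}

lemma energy_succ_add_dissipation_le (hI : IsIteration T s ρ r η κ z u A B)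
    (h : IsAdmissible s ρ r η κ) (hT : IsComonotone ρ T) (hw : 0 ∈ T w) (k : ℕ) :
    energy s ρ r η (k + 1 : ℕ) (A (k + 1)) (z (k + 1)) (u (k + 1)) w
        + dissipation s ρ r η κ k (A k) (B k) (A (k + 1))
      ≤ energy s ρ r η k (A k) (z k) (u k) w := by
  rw [hI.anchor_succ, Nat.cast_succ]
  exact energy_add_one_add_dissipation_le h k.cast_nonneg (hI.smul_succ k) (hI.error_le k)
    (hT (hI.residual_mem (k + 1)) (hI.residual_mem k))
    (hT.mul_sq_norm_le_inner (hI.residual_mem (k + 1)) hw)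

lemma mul_sq_norm_anchor_sub_le_energy (hI : IsIteration T s ρ r η κ z u A B)
    (h : IsAdmissible s ρ r η κ) (hT : IsComonotone ρ T) (hw : 0 ∈ T w) (k : ℕ) :
    r * ((r - 1) * (s + 2 * ρ) - η * r) / (2 * η * (s + 2 * ρ)) * ‖u k - w‖ ^ 2
      ≤ energy s ρ r η k (A k) (z k) (u k) w :=
  mul_sq_norm_sub_le_energy h k.cast_nonneg (hT.mul_sq_norm_le_inner (hI.residual_mem k) hw)

lemma bddBelow_range_energy (hI : IsIteration T s ρ r η κ z u A B)
    (h : IsAdmissible s ρ r η κ) (hT : IsComonotone ρ T) (hw : 0 ∈ T w) :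
    BddBelow (Set.range fun k : ℕ => energy s ρ r η k (A k) (z k) (u k) w) := by
  refine ⟨0, Set.forall_mem_range.2 fun k => le_trans ?_
    (hI.mul_sq_norm_anchor_sub_le_energy h hT hw k)⟩
  have := h.coercivity_pos
  positivity

lemma exists_tendsto_energy (hI : IsIteration T s ρ r η κ z u A B)
    (h : IsAdmissible s ρ r η κ) (hT : IsComonotone ρ T) (hw : 0 ∈ T w) :
    ∃ l, Tendsto (fun k : ℕ => energy s ρ r η k (A k) (z k) (u k) w) atTop (𝓝 l) :=
  exists_tendsto_of_add_le (hI.bddBelow_range_energy h hT hw)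
    (fun k => dissipation_nonneg h k.cast_nonneg) (hI.energy_succ_add_dissipation_le h hT hw)

lemma summable_dissipation (hI : IsIteration T s ρ r η κ z u A B)
    (h : IsAdmissible s ρ r η κ) (hT : IsComonotone ρ T) (hw : 0 ∈ T w) :
    Summable fun k : ℕ => dissipation s ρ r η κ k (A k) (B k) (A (k + 1)) :=
  summable_of_add_le (hI.bddBelow_range_energy h hT hw)
    (fun k => dissipation_nonneg h k.cast_nonneg) (hI.energy_succ_add_dissipation_le h hT hw)

lemma summable_sq_norm_gap (hI : IsIteration T s ρ r η κ z u A B)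
    (h : IsAdmissible s ρ r η κ) (hT : IsComonotone ρ T) (hw : 0 ∈ T w) :
    Summable fun k : ℕ => ‖gap r k (A k) (B k)‖ ^ 2 := by
  have hμ := mul_pos (half_pos h.step_pos) h.one_sub_sq_error_pos
  refine (summable_mul_left_iff hμ.ne').1 (.of_nonneg_of_le (fun k => by positivity)
    (fun k => ?_) (hI.summable_dissipation h hT hw))
  exact mul_sq_norm_gap_le_dissipation h k.cast_nonneg

lemma summable_mul_sq_norm_residual (hI : IsIteration T s ρ r η κ z u A B)
    (h : IsAdmissible s ρ r η κ) (hT : IsComonotone ρ T) (hw : 0 ∈ T w) :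
    Summable fun k : ℕ => ((k : ℝ) + r) * ‖A (k + 1)‖ ^ 2 := by
  have hr := h.weight_pos
  have hδ := half_pos (sub_pos.2 h.anchor_mul_lt)
  refine (summable_mul_left_iff hδ.ne').1 (.of_nonneg_of_le (fun k => by positivity)
    (fun k => ?_) (hI.summable_dissipation h hT hw))
  exact mul_sq_norm_residual_le_dissipation h k.cast_nonneg

lemma tendsto_residual (hI : IsIteration T s ρ r η κ z u A B)
    (h : IsAdmissible s ρ r η κ) (hT : IsComonotone ρ T) (hw : 0 ∈ T w) :
    Tendsto A atTop (𝓝 0) := by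
  have hsq : Tendsto (fun k => ‖A (k + 1)‖ ^ 2) atTop (𝓝 0) := by
    refine squeeze_zero (fun k => by positivity) (fun k => ?_)
      (hI.summable_mul_sq_norm_residual h hT hw).tendsto_atTop_zero
    exact le_mul_of_one_le_left (by positivity)
      (by linarith [h.one_lt_weight, k.cast_nonneg (α := ℝ)])
  rw [← tendsto_add_atTop_iff_nat 1, tendsto_zero_iff_norm_tendsto_zero]
  simpa using hsq.sqrt

lemma isBoundedUnder_anchor (hI : IsIteration T s ρ r η κ z u A B)
    (h : IsAdmissible s ρ r η κ) (hT : IsComonotone ρ T) (hw : 0 ∈ T w) :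
    IsBoundedUnder (· ≤ ·) atTop (norm ∘ u) := by
  obtain ⟨l, hl⟩ := hI.exists_tendsto_energy h hT hw
  obtain ⟨M, hM⟩ := hl.bddAbove_range
  have hε := h.coercivity_pos
  set ε := r * ((r - 1) * (s + 2 * ρ) - η * r) / (2 * η * (s + 2 * ρ))
  refine isBoundedUnder_of ⟨√(M / ε) + ‖w‖, fun k => ?_⟩
  have hsq : ‖u k - w‖ ^ 2 ≤ M / ε := by
    rw [le_div_iff₀' hε]
    exact (hI.mul_sq_norm_anchor_sub_le_energy h hT hw k).trans (hM ⟨k, rfl⟩)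
  calc ‖u k‖ ≤ ‖u k - w‖ + ‖w‖ := norm_le_norm_sub_add _ _
    _ ≤ √(M / ε) + ‖w‖ := by
      gcongr
      exact Real.le_sqrt_of_sq_le hsq

lemma tendsto_sub_anchor (hI : IsIteration T s ρ r η κ z u A B)
    (h : IsAdmissible s ρ r η κ) (hT : IsComonotone ρ T) (hw : 0 ∈ T w) :
    Tendsto (fun k => z k - u k) atTop (𝓝 0) := by
  have hr := h.weight_pos
  have hsum := ((hI.summable_sq_norm_gap h hT hw).mul_left (2 * (s + 2 * ρ + |2 * ρ|) ^ 2 / r)).add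
    ((hI.summable_mul_sq_norm_residual h hT hw).mul_left (2 * (η - (s + 2 * ρ)) ^ 2 / r))
  have hsq : Tendsto (fun k => ‖z k - u k‖ ^ 2) atTop (𝓝 0) := by
    refine tendsto_zero_of_succ_le_one_sub_mul_add (fun k => by positivity)
      (fun k => by positivity) (not_summable_const_div_natCast_add hr.ne' hr.le)
      (fun k => by positivity) hsum fun k => ?_
    rw [hI.anchor_succ]
    exact sq_norm_sub_anchor_le h k.cast_nonneg (hI.smul_succ k) (hI.error_le k)
  rw [tendsto_zero_iff_norm_tendsto_zero]
  simpa using hsq.sqrt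

lemma exists_tendsto_inner_anchor (hI : IsIteration T s ρ r η κ z u A B)
    (h : IsAdmissible s ρ r η κ) (hT : IsComonotone ρ T) {p q : H} (hp : 0 ∈ T p)
    (hq : 0 ∈ T q) : ∃ l, Tendsto (fun k => ⟪u k, p - q⟫) atTop (𝓝 l) := by
  obtain ⟨a, ha⟩ := hI.exists_tendsto_energy h hT hp
  obtain ⟨b, hb⟩ := hI.exists_tendsto_energy h hT hq
  have hr := mul_ne_zero h.weight_pos.ne' (sub_pos.2 h.one_lt_weight).ne'
  exact ⟨_, (((hb.sub ha).const_mul (η / (r * (r - 1)))).add_const _).congr fun k =>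
    (inner_sub_eq_energy_sub_energy hr h.anchor_pos.ne' p q).symm⟩

theorem exists_weakTendsto [CompleteSpace H] (hI : IsIteration T s ρ r η κ z u A B)
    (h : IsAdmissible s ρ r η κ) (hT : IsComonotone ρ T) (hw : 0 ∈ T w)
    (hrange : ∀ p, ∃ y, ∃ a ∈ T y, y + s • a = p) :
    ∃ p, 0 ∈ T p ∧ WeakTendsto z atTop p ∧ WeakTendsto u atTop p := by
  have hbdd := hI.isBoundedUnder_anchor h hT hw
  have hdiff := hI.tendsto_sub_anchor h hT hw
  have hbdd_z : IsBoundedUnder (· ≤ ·) atTop (norm ∘ z) :=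
    (isBoundedUnder_le_add hdiff.norm.isBoundedUnder_le hbdd).mono_le
      (.of_forall fun k => norm_le_norm_sub_add (z k) (u k))
  have hsρ : 0 < s + ρ := by linarith [h.step_pos, h.shifted_step_pos]
  obtain ⟨p, hp, hup⟩ := exists_weakTendsto_of_forall_ultrafilter_mem (S := {p | 0 ∈ T p}) hbdd
    (fun U p hU hup => hT.zero_mem_of_weakTendsto hsρ hrange hI.residual_mem
      ((hI.tendsto_residual h hT hw).mono_left hU) (hbdd_z.mono hU)
      (hup.of_tendsto_sub (hdiff.mono_left hU)))
    (fun p hp q hq => hI.exists_tendsto_inner_anchor h hT hp hq)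
  exact ⟨p, hp, hup.of_tendsto_sub hdiff, hup⟩

end IsIteration

end SFBS

theorem sfbs_weak_convergence_general {H : Type*} [NormedAddCommGroup H] [InnerProductSpace ℝ H]
    [CompleteSpace H] {L ρ s r D : ℝ} {F : H → H} {G : H → Set H} {z zh zt u Gt : ℕ → H}
    (hL : 0 ≤ L) (hLip : ∀ x y, ‖F x - F y‖ ≤ L * ‖x - y‖)
    (hcomono : ∀ x y g h, g ∈ G x → h ∈ G y →
      ρ * ‖(F x + g) - (F y + h)‖ ^ 2 ≤ ⟪(F x + g) - (F y + h), x - y⟫)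
    (hrange : ∀ p, ∃ y, ∃ h ∈ G y, y + s • (F y + h) = p)
    (hsol : ∃ w, -F w ∈ G w) (hs : 0 < s) (hsρ : 0 < s + 2 * ρ) (hsL : s * L < 1)
    (hr : 1 < r) (hD₀ : 0 < D) (hD : D < (r - 1) * (s + 2 * ρ)) (hGt : ∀ k, Gt k ∈ G (z k))
    (hzt : ∀ k : ℕ, zt (k + 1) = ((k : ℝ) / ((k : ℝ) + r)) • z k + (r / ((k : ℝ) + r)) • u k)
    (hzh : ∀ k : ℕ, zh k =
      zt (k + 1) - ((k : ℝ) / ((k : ℝ) + r) * (s + 2 * ρ)) • (F (z k) + Gt k))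
    (hz : ∀ k : ℕ, z (k + 1) = zt (k + 1) - s • (F (zh k) + Gt (k + 1))
      - ((2 * ρ * (k : ℝ)) / ((k : ℝ) + r)) • (F (z k) + Gt k))
    (hu : ∀ k, u (k + 1) = u k - (D / r) • (F (z (k + 1)) + Gt (k + 1))) :
    ∃ p, -F p ∈ G p ∧ WeakTendsto z atTop p ∧ WeakTendsto u atTop p := by
  have hr₀ : 0 < r := one_pos.trans hr
  have hiter := SFBS.isIteration_of_lipschitz hLip hs.le hr₀ hGt hzt hzh hz hu
  have hadmissible : SFBS.IsAdmissible s ρ r (D / r) (s * L) :=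
    ⟨hs, hsρ, hr, by positivity, by rwa [div_mul_cancel₀ D hr₀.ne'], by positivity, hsL⟩
  have hT : IsComonotone ρ fun x => (F x + ·) '' G x := by
    rintro x y _ _ ⟨g, hg, rfl⟩ ⟨h, hh, rfl⟩
    exact hcomono x y g h hg hh
  have hzero (w) : 0 ∈ (F w + ·) '' G w ↔ -F w ∈ G w := by simp
  obtain ⟨w, hw⟩ := hsol
  simpa only [hzero] using hiter.exists_weakTendsto hadmissible hT ((hzero w).2 hw)
    (by simpa only [Set.exists_mem_image] using hrange)

/-- Weak convergence of the step-size-`s` SFBS method: both `(z_k)` and `(u_k)` converge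
weakly to the same zero of `T = F + G`. -/
theorem sfbs_weak_convergence
    {H : Type*} [NormedAddCommGroup H] [InnerProductSpace ℝ H] [CompleteSpace H]
    (L ρ s r D : ℝ) (F : H → H) (G : H → Set H)
    (z zh zt u Gt : ℕ → H)
    (hL : 0 < L) (hρ : -1/(2*L) < ρ)
    (hLip : ∀ x y : H, ‖F x - F y‖ ≤ L * ‖x - y‖)
    (hcomono : ∀ x y g h : H, g ∈ G x → h ∈ G y →
      ρ * ‖(F x + g) - (F y + h)‖^2 ≤ ⟪(F x + g) - (F y + h), x - y⟫)
    (hGmono : ∀ x y g h : H, g ∈ G x → h ∈ G y → 0 ≤ ⟪g - h, x - y⟫)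
    (hGmax : ∀ x w : H, (∀ y h : H, h ∈ G y → 0 ≤ ⟪w - h, x - y⟫) → w ∈ G x)
    (hsol : ∃ w : H, -F w ∈ G w)
    (hs0 : max 0 (-2*ρ) < s) (hs1 : s < 1/L)
    (hr : 1 < r) (hD0 : 0 < D) (hD : D < (r - 1) * (s + 2*ρ))
    (hu0 : u 0 = z 0) (hG0 : Gt 0 ∈ G (z 0))
    (hzt : ∀ k : ℕ, zt (k+1) = ((k : ℝ)/((k : ℝ) + r)) • z k + (r/((k : ℝ) + r)) • u k)
    (hzh : ∀ k : ℕ, zh k =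
      zt (k+1) - ((k : ℝ)/((k : ℝ) + r) * (s + 2*ρ)) • (F (z k) + Gt k))
    (hz : ∀ k : ℕ, z (k+1) = zt (k+1) - s • (F (zh k) + Gt (k+1))
        - ((2*ρ*(k : ℝ))/((k : ℝ) + r)) • (F (z k) + Gt k))
    (hGt : ∀ k : ℕ, Gt (k+1) ∈ G (z (k+1)))
    (hu : ∀ k : ℕ, u (k+1) = u k - (D/r) • (F (z (k+1)) + Gt (k+1))) :
    ∃ zinf : H, -F zinf ∈ G zinf ∧
      (∀ y : H, Tendsto (fun k : ℕ => ⟪z k, y⟫) atTop (nhds ⟪zinf, y⟫)) ∧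
      (∀ y : H, Tendsto (fun k : ℕ => ⟪u k, y⟫) atTop (nhds ⟪zinf, y⟫)) := by
  have hs : 0 < s := (le_max_left _ _).trans_lt hs0
  have hsρ : 0 < s + 2 * ρ := by linarith [(le_max_right 0 (-2 * ρ)).trans_lt hs0]
  have hsL : s * L < 1 := (lt_div_iff₀ hL).1 hs1
  have hGmaximal : IsMaximalMonotone G :=
    ⟨fun x y g h hg hh => by simpa using hGmono x y g h hg hh, fun x w => hGmax x w⟩
  have hGt_mem : ∀ k, Gt k ∈ G (z k) := Nat.rec hG0 fun k _ => hGt k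
  exact sfbs_weak_convergence_general hL.le hLip hcomono
    (hGmaximal.exists_add_smul_add_eq hLip hL.le hs hsL) hsol hs hsρ hsL hr hD0 hD hGt_mem
    hzt hzh hz hu
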